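/- arXiv:1604.00753 — 2 statements merged into one kernel-verified Lean document; each statement's English description precedes it below -/
import Mathlib

section
/- ∫₀¹ x·log Γ(x)·log(sin(πx)) dx = −(1/4)·log 2·log(2π/A⁴) − π²/48 + C·ζ(3)/(2π²) + ζ′(3)/(2π²) + (1/(2π²))·∑_{n=2}^∞ (H_n·log n)/n², where A = e^{1/12 − ζ′(−1)} is the Glaisher–Kinkelin constant, C = log(2π) + γ, and H_n is the n-th harmonic number. -/
open Real

/-!
The integral is an `L²` inner product on `[0, 1]`, so Parseval's identity turns it into a series in
the trigonometric coefficients of `log Γ(x)` and of `x log sin(πx)`.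

The reflection formula gives the cosine coefficients of `log Γ`, and it writes the sine
coefficients `bₙ` of `log Γ` as those of `(x - 1/2) log sin(πx)`, which are explicit in terms of
harmonic numbers, up to an error that the Riemann–Lebesgue lemma controls; hence
`2πn bₙ - log n → log(2π) + γ`. By Legendre's duplication formula `2πn bₙ - log n` does not change
when `n` is doubled, so it equals its limit for every `n ≥ 1`: this is Kummer's Fourier series of
`log Γ`.

The Parseval series splits into `∑ 1/n²`, `∑ (log n)/n² = -ζ'(2)`, `∑ (log n)/n³ = -ζ'(3)`, Euler's
sum `∑ Hₙ₋₁/n² = ζ(3)` (itself obtained by applying Parseval twice) and the harmonic series of the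
statement. The functional equation of `ζ` relates `ζ'(2)` to `ζ'(-1)`, that is to Glaisher's
constant.
-/

section

open Filter MeasureTheory Set Topology

/-! ### Trigonometric coefficients on the unit interval -/

/-- The `n`-th cosine coefficient `∫₀¹ f(x) cos(2πnx) dx`, without the customary factor `2`, so
that the case `n = 0` is the mean of `f`. -/
noncomputable def cosCoeff (f : ℝ → ℝ) (n : ℕ) : ℝ :=
  ∫ x in (0 : ℝ)..1, f x * cos (2 * π * n * x)

/-- The `n`-th sine coefficient `∫₀¹ f(x) sin(2πnx) dx`, normalised like `cosCoeff`. -/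
noncomputable def sinCoeff (f : ℝ → ℝ) (n : ℕ) : ℝ :=
  ∫ x in (0 : ℝ)..1, f x * sin (2 * π * n * x)

section Coefficients

variable {f g : ℝ → ℝ}

lemma cosCoeff_zero_right (f : ℝ → ℝ) : cosCoeff f 0 = ∫ x in (0 : ℝ)..1, f x := by
  simp [cosCoeff]

lemma cosCoeff_congr (h : EqOn f g (Ioo 0 1)) (n : ℕ) : cosCoeff f n = cosCoeff g n :=
  intervalIntegral.integral_congr_Ioo_of_le zero_le_one fun x hx => by simp only [h hx]

lemma sinCoeff_congr (h : EqOn f g (Ioo 0 1)) (n : ℕ) : sinCoeff f n = sinCoeff g n :=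
  intervalIntegral.integral_congr_Ioo_of_le zero_le_one fun x hx => by simp only [h hx]

lemma cosCoeff_add (hf : IntervalIntegrable f volume 0 1) (hg : IntervalIntegrable g volume 0 1)
    (n : ℕ) : cosCoeff (fun x => f x + g x) n = cosCoeff f n + cosCoeff g n := by
  simp only [cosCoeff, add_mul]
  exact intervalIntegral.integral_add (hf.mul_continuousOn (by fun_prop))
    (hg.mul_continuousOn (by fun_prop))

lemma sinCoeff_add (hf : IntervalIntegrable f volume 0 1) (hg : IntervalIntegrable g volume 0 1)
    (n : ℕ) : sinCoeff (fun x => f x + g x) n = sinCoeff f n + sinCoeff g n := by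
  simp only [sinCoeff, add_mul]
  exact intervalIntegral.integral_add (hf.mul_continuousOn (by fun_prop))
    (hg.mul_continuousOn (by fun_prop))

lemma cosCoeff_const_mul (c : ℝ) (f : ℝ → ℝ) (n : ℕ) :
    cosCoeff (fun x => c * f x) n = c * cosCoeff f n := by
  simp only [cosCoeff, mul_assoc, intervalIntegral.integral_const_mul]

lemma sinCoeff_const_mul (c : ℝ) (f : ℝ → ℝ) (n : ℕ) :
    sinCoeff (fun x => c * f x) n = c * sinCoeff f n := by
  simp only [sinCoeff, mul_assoc, intervalIntegral.integral_const_mul]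

lemma cosCoeff_sub (hf : IntervalIntegrable f volume 0 1) (hg : IntervalIntegrable g volume 0 1)
    (n : ℕ) : cosCoeff (fun x => f x - g x) n = cosCoeff f n - cosCoeff g n := by
  simp only [cosCoeff, sub_mul]
  exact intervalIntegral.integral_sub (hf.mul_continuousOn (by fun_prop))
    (hg.mul_continuousOn (by fun_prop))

lemma sinCoeff_sub (hf : IntervalIntegrable f volume 0 1) (hg : IntervalIntegrable g volume 0 1)
    (n : ℕ) : sinCoeff (fun x => f x - g x) n = sinCoeff f n - sinCoeff g n := by
  simp only [sinCoeff, sub_mul]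
  exact intervalIntegral.integral_sub (hf.mul_continuousOn (by fun_prop))
    (hg.mul_continuousOn (by fun_prop))

lemma cosCoeff_comp_one_sub (f : ℝ → ℝ) (n : ℕ) :
    cosCoeff (fun x => f (1 - x)) n = cosCoeff f n := by
  have h := intervalIntegral.integral_comp_sub_left (a := 0) (b := 1)
    (fun x => f x * cos (2 * π * n * x)) 1
  have hcos (x : ℝ) : cos (2 * π * n * (1 - x)) = cos (2 * π * n * x) := by
    rw [← cos_nat_mul_two_pi_sub _ n]
    ring_nf
  simpa only [cosCoeff, hcos, sub_self, sub_zero] using h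

lemma sinCoeff_comp_one_sub (f : ℝ → ℝ) (n : ℕ) :
    sinCoeff (fun x => f (1 - x)) n = -sinCoeff f n := by
  have h := intervalIntegral.integral_comp_sub_left (a := 0) (b := 1)
    (fun x => f x * sin (2 * π * n * x)) 1
  have hsin (x : ℝ) : sin (2 * π * n * (1 - x)) = -sin (2 * π * n * x) := by
    rw [← sin_nat_mul_two_pi_sub _ n]
    ring_nf
  rw [sinCoeff, sinCoeff, ← intervalIntegral.integral_neg]
  simpa only [hsin, mul_neg, neg_neg, intervalIntegral.integral_neg, neg_eq_iff_eq_neg, sub_self,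
    sub_zero] using h

lemma cosCoeff_eq_zero_of_antisymm (h : ∀ x, f (1 - x) = -f x) (n : ℕ) : cosCoeff f n = 0 := by
  have hn := cosCoeff_comp_one_sub f n
  simp only [h, ← neg_one_mul (f _), cosCoeff_const_mul] at hn
  linarith

lemma sinCoeff_eq_zero_of_symm (h : ∀ x, f (1 - x) = f x) (n : ℕ) : sinCoeff f n = 0 := by
  have hn := sinCoeff_comp_one_sub f n
  simp only [h] at hn
  linarith

lemma two_pi_mul_sinCoeff {f' : ℝ → ℝ} (hf : ContinuousOn f (Icc 0 1))
    (hf' : ∀ x ∈ Ioo (0 : ℝ) 1, HasDerivAt f (f' x) x) (hint : IntervalIntegrable f' volume 0 1)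
    (n : ℕ) : 2 * π * n * sinCoeff f n = f 0 - f 1 + cosCoeff f' n := by
  have hcos (x : ℝ) : HasDerivAt (fun x => -cos (2 * π * n * x))
      (2 * π * n * sin (2 * π * n * x)) x := by
    simpa [mul_comm] using ((hasDerivAt_id x).const_mul (2 * π * n)).cos.fun_neg
  have h := intervalIntegral.integral_mul_deriv_eq_deriv_mul_of_hasDerivAt (a := 0) (b := 1)
    (u := f) (v := fun x => -cos (2 * π * n * x)) (by rwa [uIcc_of_le zero_le_one]) (by fun_prop)
    (by simpa using hf') (fun x _ => hcos x) hint
    (Continuous.intervalIntegrable (by fun_prop) _ _)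
  have hend : cos (2 * π * n) = 1 := mul_comm (2 * π) n ▸ cos_nat_mul_two_pi n
  simp only [mul_one, hend, mul_zero, cos_zero, mul_neg, intervalIntegral.integral_neg] at h
  rw [sinCoeff, ← intervalIntegral.integral_const_mul, cosCoeff]
  simp only [mul_left_comm (2 * π * n : ℝ)]
  linarith

lemma two_pi_mul_cosCoeff {f' : ℝ → ℝ} (hf : ContinuousOn f (Icc 0 1))
    (hf' : ∀ x ∈ Ioo (0 : ℝ) 1, HasDerivAt f (f' x) x) (hint : IntervalIntegrable f' volume 0 1)
    (n : ℕ) : 2 * π * n * cosCoeff f n = -sinCoeff f' n := by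
  have hsin (x : ℝ) : HasDerivAt (fun x => sin (2 * π * n * x))
      (2 * π * n * cos (2 * π * n * x)) x := by
    simpa [mul_comm] using ((hasDerivAt_id x).const_mul (2 * π * n)).sin
  have h := intervalIntegral.integral_mul_deriv_eq_deriv_mul_of_hasDerivAt (a := 0) (b := 1)
    (u := f) (v := fun x => sin (2 * π * n * x)) (by rwa [uIcc_of_le zero_le_one]) (by fun_prop)
    (by simpa using hf') (fun x _ => hsin x) hint
    (Continuous.intervalIntegrable (by fun_prop) _ _)
  have hend : sin (2 * π * n) = 0 := by
    simpa [mul_right_comm] using sin_nat_mul_pi (2 * n)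
  simp only [mul_one, hend, mul_zero, sin_zero] at h
  rw [cosCoeff, ← intervalIntegral.integral_const_mul, sinCoeff]
  simp only [mul_left_comm (2 * π * n : ℝ)]
  linarith

lemma sinCoeff_two_mul (hf : IntervalIntegrable f volume 0 1) (n : ℕ) :
    2 * sinCoeff f (2 * n) = sinCoeff (fun x => f (x / 2) + f (x / 2 + 1 / 2)) n := by
  set F : ℝ → ℝ := fun x => f x * sin (2 * π * (2 * n : ℕ) * x) with hF
  have hFi : IntervalIntegrable F volume 0 1 := hf.mul_continuousOn (by fun_prop)
  have hleft : IntervalIntegrable F volume 0 (1 / 2) :=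
    hFi.mono_set (by rw [uIcc_of_le, uIcc_of_le] <;> grind)
  have hright : IntervalIntegrable F volume (1 / 2) 1 :=
    hFi.mono_set (by rw [uIcc_of_le, uIcc_of_le] <;> grind)
  have hleft' : IntervalIntegrable (fun x => F (x / 2)) volume 0 1 := by
    simpa [div_eq_inv_mul] using hleft.comp_mul_left (c := 1 / 2)
  have hright' : IntervalIntegrable (fun x => F (x / 2 + 1 / 2)) volume 0 1 := by
    simpa [div_eq_inv_mul, show (1 : ℝ) - 2⁻¹ = 2⁻¹ by norm_num] using
      (hright.comp_add_right (1 / 2)).comp_mul_left (c := 1 / 2)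
  have hsplit (x : ℝ) : (f (x / 2) + f (x / 2 + 1 / 2)) * sin (2 * π * n * x) =
      F (x / 2) + F (x / 2 + 1 / 2) := by
    have hx : sin (2 * π * (2 * n : ℕ) * (x / 2 + 1 / 2)) = sin (2 * π * n * x) := by
      rw [← sin_add_nat_mul_two_pi (2 * π * n * x) n]
      push_cast
      ring_nf
    have hx' : 2 * π * (2 * n : ℕ) * (x / 2) = 2 * π * n * x := by
      push_cast
      ring
    simp only [hF, hx, hx', add_mul]
  rw [sinCoeff, sinCoeff, ← intervalIntegral.integral_add_adjacent_intervals hleft hright]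
  simp only [hsplit]
  rw [intervalIntegral.integral_add hleft' hright',
    intervalIntegral.integral_comp_div _ two_ne_zero,
    intervalIntegral.integral_comp_div_add _ two_ne_zero, zero_div, zero_add, smul_eq_mul,
    smul_eq_mul, ← mul_add, add_halves]

end Coefficients

/-! ### Parseval's identity -/

section Parseval

variable {f g : ℝ → ℝ}

lemma intervalIntegrable_of_memLp_two (hf : MemLp f 2 (volume.restrict (Ioc 0 1))) :
    IntervalIntegrable f volume 0 1 :=
  (intervalIntegrable_iff_integrableOn_Ioc_of_le zero_le_one).2 (hf.integrable one_le_two)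

lemma fourierCoeffOn_zero_one_ofReal (hf : IntervalIntegrable f volume 0 1) (n : ℤ) :
    fourierCoeffOn (zero_lt_one' ℝ) (fun x => (f x : ℂ)) n =
      ((∫ x in (0 : ℝ)..1, f x * cos (2 * π * n * x) : ℝ) : ℂ) -
        ((∫ x in (0 : ℝ)..1, f x * sin (2 * π * n * x) : ℝ) : ℂ) * Complex.I := by
  have hc : IntervalIntegrable (fun x => f x * cos (2 * π * n * x)) volume 0 1 :=
    hf.mul_continuousOn (by fun_prop)
  have hs : IntervalIntegrable (fun x => f x * sin (2 * π * n * x)) volume 0 1 :=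
    hf.mul_continuousOn (by fun_prop)
  have hc' : IntervalIntegrable (fun x => ((f x * cos (2 * π * n * x) : ℝ) : ℂ)) volume 0 1 :=
    ⟨hc.1.ofReal, hc.2.ofReal⟩
  have hs' : IntervalIntegrable (fun x => ((f x * sin (2 * π * n * x) : ℝ) : ℂ)) volume 0 1 :=
    ⟨hs.1.ofReal, hs.2.ofReal⟩
  have hexp (x : ℝ) : 2 * (π : ℂ) * Complex.I * ((-n : ℤ) : ℂ) * x / ((1 - 0 : ℝ) : ℂ) =
      ((-(2 * π * n * x) : ℝ) : ℂ) * Complex.I := by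
    push_cast
    ring
  rw [fourierCoeffOn_eq_integral, ← intervalIntegral.integral_ofReal,
    ← intervalIntegral.integral_ofReal, ← intervalIntegral.integral_mul_const,
    ← intervalIntegral.integral_sub hc' (hs'.mul_const _)]
  simp only [sub_zero, one_div, inv_one, one_smul]
  refine intervalIntegral.integral_congr fun x _ => ?_
  simp only [fourier_coe_apply]
  rw [hexp, Complex.exp_mul_I, ← Complex.ofReal_cos, ← Complex.ofReal_sin, cos_neg, sin_neg,
    smul_eq_mul]
  push_cast
  ring

lemma sq_norm_fourierCoeffOn_zero_one_ofReal (hf : IntervalIntegrable f volume 0 1) (n : ℤ) :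
    ‖fourierCoeffOn (zero_lt_one' ℝ) (fun x => (f x : ℂ)) n‖ ^ 2 =
      cosCoeff f n.natAbs ^ 2 + sinCoeff f n.natAbs ^ 2 := by
  rw [fourierCoeffOn_zero_one_ofReal hf, sub_eq_add_neg, ← neg_mul, ← Complex.ofReal_neg,
    Complex.sq_norm, Complex.normSq_add_mul_I, neg_sq, cosCoeff, sinCoeff]
  obtain h | h := n.natAbs_eq
  · rw [h]
    simp
  · rw [h]
    simp

lemma hasSum_sq_cosCoeff_add_sq_sinCoeff (hf : MemLp f 2 (volume.restrict (Ioc 0 1))) :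
    HasSum (fun n : ℕ => 2 * (cosCoeff f (n + 1) ^ 2 + sinCoeff f (n + 1) ^ 2))
      ((∫ x in (0 : ℝ)..1, f x ^ 2) - cosCoeff f 0 ^ 2) := by
  have h := hasSum_sq_fourierCoeffOn (zero_lt_one' ℝ) (f := fun x => (f x : ℂ)) hf.ofReal
  simp only [sq_norm_fourierCoeffOn_zero_one_ofReal (intervalIntegrable_of_memLp_two hf)] at h
  have hpos := (hasSum_nat_add_iff' 1).2 h.nat_add_neg
  simp only [Int.natAbs_neg, Int.natAbs_natCast, ← two_mul, Finset.range_one,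
    Finset.sum_singleton] at hpos
  have hint : ∫ x in (0 : ℝ)..1, ‖(f x : ℂ)‖ ^ 2 = ∫ x in (0 : ℝ)..1, f x ^ 2 := by
    simp only [Complex.norm_real, norm_eq_abs, sq_abs]
  have hzero : sinCoeff f 0 = 0 := by simp [sinCoeff]
  convert! hpos using 1
  rw [hint, Int.natAbs_zero, hzero, sub_zero, inv_one, one_smul]
  ring

lemma hasSum_cosCoeff_mul_add_sinCoeff_mul (hf : MemLp f 2 (volume.restrict (Ioc 0 1)))
    (hg : MemLp g 2 (volume.restrict (Ioc 0 1))) :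
    HasSum (fun n : ℕ => 2 * (cosCoeff f (n + 1) * cosCoeff g (n + 1) +
        sinCoeff f (n + 1) * sinCoeff g (n + 1)))
      ((∫ x in (0 : ℝ)..1, f x * g x) - cosCoeff f 0 * cosCoeff g 0) := by
  have hfi := intervalIntegrable_of_memLp_two hf
  have hgi := intervalIntegrable_of_memLp_two hg
  have hadd := hasSum_sq_cosCoeff_add_sq_sinCoeff (hf.add hg)
  have hsub := hasSum_sq_cosCoeff_add_sq_sinCoeff (hf.sub hg)
  have hsq : (∫ x in (0 : ℝ)..1, (f x + g x) ^ 2) - ∫ x in (0 : ℝ)..1, (f x - g x) ^ 2 =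
      4 * ∫ x in (0 : ℝ)..1, f x * g x := by
    rw [← intervalIntegral.integral_sub, ← intervalIntegral.integral_const_mul]
    · exact intervalIntegral.integral_congr fun x _ => by ring
    · exact (intervalIntegrable_iff_integrableOn_Ioc_of_le zero_le_one).2 (hf.add hg).integrable_sq
    · exact (intervalIntegrable_iff_integrableOn_Ioc_of_le zero_le_one).2 (hf.sub hg).integrable_sq
  simp only [Pi.add_def, Pi.sub_def, cosCoeff_add hfi hgi, sinCoeff_add hfi hgi,
    cosCoeff_sub hfi hgi, sinCoeff_sub hfi hgi] at hadd hsub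
  convert! (hadd.sub hsub).mul_left (1 / 4) using 1
  · ext n
    ring
  · linear_combination (-1 / 4 : ℝ) * hsq

lemma tendsto_cosCoeff_atTop (hf : MemLp f 2 (volume.restrict (Ioc 0 1))) :
    Tendsto (cosCoeff f) atTop (𝓝 0) := by
  have hsum := (hasSum_sq_cosCoeff_add_sq_sinCoeff hf).summable.tendsto_atTop_zero
  have hsq : Tendsto (fun n => cosCoeff f (n + 1) ^ 2) atTop (𝓝 0) :=
    squeeze_zero (fun n => sq_nonneg _)
      (fun n => by nlinarith [sq_nonneg (cosCoeff f (n + 1)), sq_nonneg (sinCoeff f (n + 1))]) hsum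
  have habs := hsq.sqrt
  simp only [sqrt_sq_eq_abs, sqrt_zero] at habs
  exact (tendsto_add_atTop_iff_nat 1).1 ((tendsto_zero_iff_abs_tendsto_zero _).2 habs)

end Parseval

/-! ### Coefficients of the first two Bernoulli polynomials -/

lemma cosCoeff_one {n : ℕ} (hn : n ≠ 0) : cosCoeff (fun _ => 1) n = 0 := by
  have h := two_pi_mul_cosCoeff (f := fun _ => 1) (f' := fun _ => 0) (by fun_prop)
    (fun x _ => hasDerivAt_const x 1) (by simp) n
  simpa [sinCoeff, hn, pi_ne_zero] using h

-- At `n = 0` both sides vanish, the right one because `x / 0 = 0`.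
lemma sinCoeff_sub_half (n : ℕ) : sinCoeff (fun x => x - 1 / 2) n = -(1 / (2 * π * n)) := by
  obtain rfl | hn := eq_or_ne n 0
  · simp [sinCoeff]
  have h := two_pi_mul_sinCoeff (f := fun x => x - 1 / 2) (f' := fun _ => 1) (by fun_prop)
    (fun x _ => (hasDerivAt_id x).sub_const _) (by simp) n
  rw [cosCoeff_one hn] at h
  rw [← neg_div, eq_div_iff (by positivity)]
  linarith

lemma cosCoeff_sub_half_sq {n : ℕ} (hn : n ≠ 0) :
    cosCoeff (fun x => (x - 1 / 2) ^ 2) n = 2 / (2 * π * n) ^ 2 := by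
  have h := two_pi_mul_cosCoeff (f := fun x => (x - 1 / 2) ^ 2) (f' := fun x => 2 * (x - 1 / 2))
    (by fun_prop) (fun x _ => by simpa using ((hasDerivAt_id' x).sub_const (1 / 2 : ℝ)).fun_pow 2)
    (Continuous.intervalIntegrable (by fun_prop) _ _) n
  rw [sinCoeff_const_mul, sinCoeff_sub_half] at h
  field_simp at h ⊢
  linarith

/-! ### Coefficients of `log (sin (π x))` and of `(x - 1/2) log (sin (π x))` -/

lemma sin_two_mul_nat_mul (n : ℕ) (θ : ℝ) :
    sin (2 * n * θ) = sin θ * ∑ k ∈ Finset.range n, 2 * cos ((2 * k + 1) * θ) := by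
  induction n with
  | zero => simp
  | succ n ih =>
    have h := sin_sub_sin (2 * (n + 1 : ℕ) * θ) (2 * n * θ)
    rw [Finset.sum_range_succ, mul_add, ← ih]
    push_cast at h ⊢
    ring_nf at h ⊢
    linarith

lemma one_sub_cos_two_mul_nat_mul (n : ℕ) (θ : ℝ) :
    1 - cos (2 * n * θ) = sin θ * ∑ k ∈ Finset.range n, 2 * sin ((2 * k + 1) * θ) := by
  induction n with
  | zero => simp
  | succ n ih =>
    have h := cos_sub_cos (2 * (n + 1 : ℕ) * θ) (2 * n * θ)
    rw [Finset.sum_range_succ, mul_add, ← ih]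
    push_cast at h ⊢
    ring_nf at h ⊢
    linarith

lemma sin_pi_mul_pos {x : ℝ} (hx : x ∈ Ioo (0 : ℝ) 1) : 0 < sin (π * x) :=
  sin_pos_of_pos_of_lt_pi (mul_pos pi_pos hx.1) (mul_lt_of_lt_one_right pi_pos hx.2)

lemma sin_pi_mul_one_sub (x : ℝ) : sin (π * (1 - x)) = sin (π * x) := by
  rw [mul_sub, mul_one, sin_pi_sub]

lemma intervalIntegrable_log_sin_pi_mul :
    IntervalIntegrable (fun x => log (sin (π * x))) volume 0 1 := by
  simpa [Function.comp_def, pi_ne_zero] using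
    (intervalIntegrable_log_sin (a := 0) (b := π)).comp_mul_left (c := π)

lemma integral_log_sin_pi_mul : ∫ x in (0 : ℝ)..1, log (sin (π * x)) = -log 2 := by
  rw [intervalIntegral.integral_comp_mul_left (fun x => log (sin x)) pi_ne_zero, mul_zero, mul_one,
    integral_log_sin_zero_pi, smul_eq_mul]
  field_simp

-- Integration by parts: the factor `sin (π x)` of `v` cancels the pole of the derivative
-- `π cos (π x) / sin (π x)` of `log (sin (π x))`.
lemma integral_deriv_mul_log_sin_pi_mul {v v' w : ℝ → ℝ} (hv : ∀ x, HasDerivAt v (v' x) x)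
    (hv' : Continuous v') (hw : Continuous w) (hvw : ∀ x, v x = sin (π * x) * w x) :
    ∫ x in (0 : ℝ)..1, v' x * log (sin (π * x)) =
      -(π * ∫ x in (0 : ℝ)..1, w x * cos (π * x)) := by
  have hsin (x : ℝ) : HasDerivAt (fun x => sin (π * x)) (π * cos (π * x)) x := by
    simpa [mul_comm] using ((hasDerivAt_id x).const_mul π).sin
  have hcont : Continuous fun x => v x * log (sin (π * x)) := by
    have h : Continuous fun x => w x * (sin (π * x) * log (sin (π * x))) :=
      hw.mul (continuous_mul_log.comp (by fun_prop : Continuous fun x => sin (π * x)))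
    exact h.congr fun x => by rw [hvw]; ring
  have hderiv (x : ℝ) (hx : x ∈ Ioo (0 : ℝ) 1) : HasDerivAt (fun x => v x * log (sin (π * x)))
      (v' x * log (sin (π * x)) + π * (w x * cos (π * x))) x := by
    have hpos := sin_pi_mul_pos hx
    refine ((hv x).mul ((hsin x).log hpos.ne')).congr_deriv ?_
    rw [hvw]
    field_simp
  have hleft : IntervalIntegrable (fun x => v' x * log (sin (π * x))) volume 0 1 :=
    intervalIntegrable_log_sin_pi_mul.continuousOn_mul hv'.continuousOn
  have hright : IntervalIntegrable (fun x => π * (w x * cos (π * x))) volume 0 1 :=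
    Continuous.intervalIntegrable (by fun_prop) _ _
  have h := intervalIntegral.integral_eq_sub_of_hasDerivAt_of_le zero_le_one hcont.continuousOn
    hderiv (hleft.add hright)
  rw [intervalIntegral.integral_add hleft hright, intervalIntegral.integral_const_mul] at h
  simp only [hvw, mul_zero, sin_zero, mul_one, sin_pi, zero_mul, sub_zero] at h
  linarith

lemma integral_mul_two_cos_mul_cos {f : ℝ → ℝ} (hf : IntervalIntegrable f volume 0 1) (k : ℕ) :
    ∫ x in (0 : ℝ)..1, f x * (2 * cos ((2 * k + 1) * (π * x)) * cos (π * x)) =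
      cosCoeff f k + cosCoeff f (k + 1) := by
  rw [cosCoeff, cosCoeff, ← intervalIntegral.integral_add (hf.mul_continuousOn (by fun_prop))
    (hf.mul_continuousOn (by fun_prop))]
  refine intervalIntegral.integral_congr fun x _ => ?_
  simp only [two_mul_cos_mul_cos, mul_add]
  push_cast
  ring_nf

lemma integral_mul_two_sin_mul_cos {f : ℝ → ℝ} (hf : IntervalIntegrable f volume 0 1) (k : ℕ) :
    ∫ x in (0 : ℝ)..1, f x * (2 * sin ((2 * k + 1) * (π * x)) * cos (π * x)) =
      sinCoeff f k + sinCoeff f (k + 1) := by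
  rw [sinCoeff, sinCoeff, ← intervalIntegral.integral_add (hf.mul_continuousOn (by fun_prop))
    (hf.mul_continuousOn (by fun_prop))]
  refine intervalIntegral.integral_congr fun x _ => ?_
  simp only [two_mul_sin_mul_cos, mul_add]
  push_cast
  ring_nf

lemma cosCoeff_log_sin_pi_mul {n : ℕ} (hn : n ≠ 0) :
    cosCoeff (fun x => log (sin (π * x))) n = -(1 / (2 * n)) := by
  have hderiv (x : ℝ) : HasDerivAt (fun x => sin (2 * n * (π * x)))
      (2 * π * n * cos (2 * π * n * x)) x := by
    refine (((hasDerivAt_id x).const_mul π).const_mul (2 * n : ℝ)).sin.congr_deriv ?_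
    simp only [id_eq, mul_one]
    ring_nf
  have hmain := integral_deriv_mul_log_sin_pi_mul hderiv (by fun_prop) (by fun_prop)
    fun x => sin_two_mul_nat_mul n (π * x)
  have hsum : ∫ x in (0 : ℝ)..1,
      (∑ k ∈ Finset.range n, 2 * cos ((2 * k + 1) * (π * x))) * cos (π * x) = 1 := by
    obtain ⟨m, rfl⟩ := Nat.exists_eq_succ_of_ne_zero hn
    have hterm (k : ℕ) := integral_mul_two_cos_mul_cos (f := fun _ => 1) (by simp) k
    simp only [one_mul] at hterm
    simp only [Finset.sum_mul]
    rw [intervalIntegral.integral_finsetSum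
      fun k _ => Continuous.intervalIntegrable (by fun_prop) _ _]
    simp [hterm, Finset.sum_range_succ', cosCoeff_one, cosCoeff_zero_right]
  have hcoeff : ∫ x in (0 : ℝ)..1, 2 * π * n * cos (2 * π * n * x) * log (sin (π * x)) =
      2 * π * n * cosCoeff (fun x => log (sin (π * x))) n := by
    rw [cosCoeff, ← intervalIntegral.integral_const_mul]
    exact intervalIntegral.integral_congr fun x _ => by ring
  rw [hcoeff, hsum] at hmain
  have hπ : π * (2 * n * cosCoeff (fun x => log (sin (π * x))) n) = π * -1 := by linarith
  rw [← neg_div, eq_div_iff (by positivity), mul_comm]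
  exact mul_left_cancel₀ pi_ne_zero hπ

lemma intervalIntegrable_sub_half_mul_log_sin_pi_mul :
    IntervalIntegrable (fun x => (x - 1 / 2) * log (sin (π * x))) volume 0 1 :=
  intervalIntegrable_log_sin_pi_mul.continuousOn_mul (by fun_prop)

lemma integral_sub_half_mul_sum_sin_mul_cos (n : ℕ) :
    ∫ x in (0 : ℝ)..1, (x - 1 / 2) *
        (∑ k ∈ Finset.range (n + 1), 2 * sin ((2 * k + 1) * (π * x))) * cos (π * x) =
      -((harmonic n + harmonic (n + 1)) / (2 * π)) := by
  have hterm (k : ℕ) := integral_mul_two_sin_mul_cos (f := fun x => x - 1 / 2)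
    (Continuous.intervalIntegrable (by fun_prop) _ _) k
  simp only [mul_assoc (_ - _ : ℝ), Finset.sum_mul, Finset.mul_sum]
  rw [intervalIntegral.integral_finsetSum
    fun k _ => Continuous.intervalIntegrable (by fun_prop) _ _]
  simp only [hterm, sinCoeff_sub_half]
  rw [Finset.sum_add_distrib, Finset.sum_range_succ', harmonic, harmonic]
  push_cast
  simp only [Finset.sum_neg_distrib, mul_zero, div_zero, neg_zero, add_zero, one_div, mul_inv,
    ← Finset.mul_sum]
  ring

lemma sinCoeff_sub_half_mul_log_sin_pi_mul (n : ℕ) :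
    sinCoeff (fun x => (x - 1 / 2) * log (sin (π * x))) (n + 1) =
      (log 2 + harmonic n) / (2 * π * (n + 1)) := by
  set N : ℕ := n + 1 with hN
  have hderiv (x : ℝ) : HasDerivAt (fun x => (x - 1 / 2) * (1 - cos (2 * N * (π * x))))
      (1 - cos (2 * π * N * x) + 2 * π * N * ((x - 1 / 2) * sin (2 * π * N * x))) x := by
    have hcos := (((hasDerivAt_id' x).const_mul π).const_mul (2 * N : ℝ)).cos.const_sub 1
    refine (((hasDerivAt_id' x).sub_const (1 / 2)).mul hcos).congr_deriv ?_
    ring_nf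
  have hmain := integral_deriv_mul_log_sin_pi_mul hderiv (by fun_prop) (by fun_prop)
    (w := fun x => (x - 1 / 2) * ∑ k ∈ Finset.range N, 2 * sin ((2 * k + 1) * (π * x)))
    fun x => by rw [one_sub_cos_two_mul_nat_mul, mul_left_comm]
  have hcoeff : ∫ x in (0 : ℝ)..1, (1 - cos (2 * π * N * x) +
        2 * π * N * ((x - 1 / 2) * sin (2 * π * N * x))) * log (sin (π * x)) =
      -log 2 - cosCoeff (fun x => log (sin (π * x))) N +
        2 * π * N * sinCoeff (fun x => (x - 1 / 2) * log (sin (π * x))) N := by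
    have hint := intervalIntegrable_log_sin_pi_mul
    have hcos := hint.mul_continuousOn (g := fun x => cos (2 * π * N * x)) (by fun_prop)
    have hsin := intervalIntegrable_sub_half_mul_log_sin_pi_mul.mul_continuousOn
      (g := fun x => sin (2 * π * N * x)) (by fun_prop)
    rw [← integral_log_sin_pi_mul, cosCoeff, sinCoeff, ← intervalIntegral.integral_const_mul,
      ← intervalIntegral.integral_sub hint hcos,
      ← intervalIntegral.integral_add (hint.sub hcos) (hsin.const_mul _)]
    exact intervalIntegral.integral_congr fun x _ => by ring
  rw [hcoeff, cosCoeff_log_sin_pi_mul n.succ_ne_zero, integral_sub_half_mul_sum_sin_mul_cos,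
    harmonic_succ] at hmain
  generalize sinCoeff (fun x => (x - 1 / 2) * log (sin (π * x))) N = s at hmain ⊢
  rw [hN] at hmain
  push_cast at hmain
  field_simp at hmain
  rw [eq_div_iff (by positivity)]
  refine mul_left_cancel₀ (n.cast_add_one_ne_zero (R := ℝ)) ?_
  linear_combination (1 / 2 : ℝ) * hmain

/-! ### Square integrability -/

section SquareIntegrable

variable {f φ : ℝ → ℝ} {p : ENNReal}

lemma memLp_Ioc_of_continuousOn {a b : ℝ} (hf : ContinuousOn f (Icc a b)) :
    MemLp f p (volume.restrict (Ioc a b)) := by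
  obtain ⟨C, hC⟩ := isCompact_Icc.exists_bound_of_continuousOn hf
  exact MemLp.of_bound ((hf.mono Ioc_subset_Icc_self).aestronglyMeasurable measurableSet_Ioc) C
    ((ae_restrict_mem measurableSet_Ioc).mono fun x hx => hC x (Ioc_subset_Icc_self hx))

lemma memLp_continuousOn_mul (hφ : ContinuousOn φ (Icc 0 1))
    (hf : MemLp f p (volume.restrict (Ioc 0 1))) :
    MemLp (fun x => φ x * f x) p (volume.restrict (Ioc 0 1)) :=
  hf.mul' (memLp_Ioc_of_continuousOn (p := ⊤) hφ)

lemma memLp_comp_one_sub (hf : MemLp f p (volume.restrict (Ioc 0 1))) :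
    MemLp (fun x => f (1 - x)) p (volume.restrict (Ioc 0 1)) := by
  rw [← restrict_Ioo_eq_restrict_Ioc] at hf ⊢
  have hmp := (Measure.measurePreserving_sub_left (volume : Measure ℝ) 1).restrict_preimage
    (s := Ioo (0 : ℝ) 1) measurableSet_Ioo
  rw [preimage_const_sub_Ioo, sub_self, sub_zero] at hmp
  exact hf.comp_measurePreserving hmp

lemma memLp_congr_Ioo (hf : MemLp f p (volume.restrict (Ioc 0 1))) (h : EqOn f φ (Ioo 0 1)) :
    MemLp φ p (volume.restrict (Ioc 0 1)) := by
  rw [← restrict_Ioo_eq_restrict_Ioc] at hf ⊢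
  exact hf.ae_eq ((ae_restrict_mem measurableSet_Ioo).mono h)

lemma memLp_two_log : MemLp log 2 (volume.restrict (Ioc 0 1)) := by
  rw [memLp_two_iff_integrable_sq measurable_log.aestronglyMeasurable]
  have hint : IntegrableOn (fun x : ℝ => 16 * x ^ (-(1 / 2) : ℝ)) (Ioc 0 1) :=
    ((intervalIntegral.intervalIntegrable_rpow' (by norm_num)).const_mul 16).1
  refine hint.mono' (measurable_log.pow_const 2).aestronglyMeasurable ?_
  refine (ae_restrict_mem measurableSet_Ioc).mono fun x hx => ?_
  have hlog : |log x * x ^ (1 / 4 : ℝ)| < 4 := by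
    simpa using abs_log_mul_self_rpow_lt x (1 / 4) hx.1 hx.2 (by norm_num)
  have hpow : (x ^ (1 / 4 : ℝ)) ^ 2 = x ^ (1 / 2 : ℝ) := by
    rw [← rpow_natCast, ← rpow_mul hx.1.le]
    norm_num
  have hpos : 0 < x ^ (1 / 2 : ℝ) := rpow_pos_of_pos hx.1 _
  rw [norm_of_nonneg (sq_nonneg _), rpow_neg hx.1.le, ← div_eq_mul_inv, le_div_iff₀ hpos, ← hpow,
    ← mul_pow, ← sq_abs]
  nlinarith [abs_nonneg (log x * x ^ (1 / 4 : ℝ))]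

end SquareIntegrable

/-! ### The logarithm of the Gamma function on the unit interval -/

lemma differentiableAt_log_Gamma {x : ℝ} (hx : 0 < x) :
    DifferentiableAt ℝ (fun x => log (Gamma x)) x :=
  (differentiableAt_Gamma fun m => ((neg_nonpos.2 m.cast_nonneg).trans_lt hx).ne').log
    (Gamma_pos_of_pos hx).ne'

lemma continuousOn_log_Gamma_add_one :
    ContinuousOn (fun x => log (Gamma (x + 1))) (Icc 0 1) := by
  have h : ContinuousOn (fun x => log (Gamma x)) (Ioi 0) := fun x hx =>
    (differentiableAt_log_Gamma hx).continuousAt.continuousWithinAt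
  exact h.comp (by fun_prop) fun x hx => mem_Ioi.2 (by linarith [hx.1])

lemma log_Gamma_add_one {x : ℝ} (hx : 0 < x) : log (Gamma (x + 1)) = log x + log (Gamma x) := by
  rw [Gamma_add_one hx.ne', log_mul hx.ne' (Gamma_pos_of_pos hx).ne']

lemma log_Gamma_reflection {x : ℝ} (hx : x ∈ Ioo (0 : ℝ) 1) :
    log (Gamma x) + log (Gamma (1 - x)) = log π - log (sin (π * x)) := by
  rw [← log_mul (Gamma_pos_of_pos hx.1).ne' (Gamma_pos_of_pos (sub_pos.2 hx.2)).ne',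
    Gamma_mul_Gamma_one_sub, log_div pi_ne_zero (sin_pi_mul_pos hx).ne']

lemma log_Gamma_duplication {x : ℝ} (hx : 0 < x) :
    log (Gamma (x / 2)) + log (Gamma (x / 2 + 1 / 2)) =
      log (Gamma x) + (1 - x) * log 2 + log π / 2 := by
  have h := Gamma_mul_Gamma_add_half (x / 2)
  rw [mul_div_cancel₀ x two_ne_zero] at h
  have hpow : (2 : ℝ) ^ (1 - x) ≠ 0 := (rpow_pos_of_pos two_pos _).ne'
  have hΓ : Gamma x ≠ 0 := (Gamma_pos_of_pos hx).ne'
  rw [← log_mul (Gamma_pos_of_pos (by positivity)).ne' (Gamma_pos_of_pos (by positivity)).ne', h,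
    log_mul (mul_ne_zero hΓ hpow) (sqrt_pos.2 pi_pos).ne', log_mul hΓ hpow, log_rpow two_pos,
    log_sqrt pi_pos.le]

lemma memLp_two_log_Gamma : MemLp (fun x => log (Gamma x)) 2 (volume.restrict (Ioc 0 1)) :=
  memLp_congr_Ioo
    ((memLp_Ioc_of_continuousOn continuousOn_log_Gamma_add_one).sub memLp_two_log)
    fun x hx => by simp [log_Gamma_add_one hx.1]

lemma memLp_two_log_sin_pi_mul :
    MemLp (fun x => log (sin (π * x))) 2 (volume.restrict (Ioc 0 1)) := by
  have h := ((memLp_const (log π)).sub memLp_two_log_Gamma).sub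
    (memLp_comp_one_sub memLp_two_log_Gamma)
  refine memLp_congr_Ioo h fun x hx => ?_
  simp only [Pi.sub_apply]
  linarith [log_Gamma_reflection hx]

lemma memLp_deriv_log_Gamma_add_one {p : ENNReal} :
    MemLp (fun x => deriv (fun x => log (Gamma x)) (x + 1)) p (volume.restrict (Ioc 0 1)) := by
  have hmono : MonotoneOn (deriv fun x => log (Gamma x)) (Ioi 0) :=
    convexOn_log_Gamma.monotoneOn_deriv fun x hx => differentiableAt_log_Gamma hx
  have hshift : MonotoneOn (fun x => deriv (fun x => log (Gamma x)) (x + 1)) (Icc 0 1) :=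
    fun x hx y hy hxy => hmono (mem_Ioi.2 (by linarith [hx.1])) (mem_Ioi.2 (by linarith [hy.1]))
      (by linarith)
  exact (hshift.memLp_isCompact isCompact_Icc).mono_measure
    (Measure.restrict_mono Ioc_subset_Icc_self le_rfl)

lemma cosCoeff_log_Gamma (n : ℕ) : cosCoeff (fun x => log (Gamma x)) n =
    (log π * cosCoeff (fun _ => 1) n - cosCoeff (fun x => log (sin (π * x))) n) / 2 := by
  have hint := intervalIntegrable_of_memLp_two memLp_two_log_Gamma
  have hint' := intervalIntegrable_of_memLp_two (memLp_comp_one_sub memLp_two_log_Gamma)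
  have h := cosCoeff_congr (fun x hx => log_Gamma_reflection hx) n
  rw [cosCoeff_add hint hint', cosCoeff_comp_one_sub (fun x => log (Gamma x)),
    cosCoeff_sub intervalIntegrable_const intervalIntegrable_log_sin_pi_mul,
    ← mul_one (log π), cosCoeff_const_mul] at h
  linarith

/-! ### Kummer's sine coefficients of `log Γ` -/

lemma two_pi_mul_sinCoeff_log_Gamma_two_mul {n : ℕ} (hn : n ≠ 0) :
    2 * π * (2 * n : ℕ) * sinCoeff (fun x => log (Gamma x)) (2 * n) =
      2 * π * n * sinCoeff (fun x => log (Gamma x)) n + log 2 := by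
  have hΓ := intervalIntegrable_of_memLp_two memLp_two_log_Gamma
  have h := sinCoeff_two_mul hΓ n
  have hdup : EqOn (fun x => log (Gamma (x / 2)) + log (Gamma (x / 2 + 1 / 2)))
      (fun x => (log (Gamma x) - log 2 * (x - 1 / 2)) + log (2 * π) / 2) (Ioo 0 1) := fun x hx => by
    simp only [log_Gamma_duplication hx.1, log_mul two_ne_zero pi_ne_zero]
    ring
  have hlin : IntervalIntegrable (fun x => log 2 * (x - 1 / 2)) volume 0 1 :=
    Continuous.intervalIntegrable (by fun_prop) _ _
  rw [sinCoeff_congr hdup, sinCoeff_add (hΓ.sub hlin) intervalIntegrable_const,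
    sinCoeff_sub hΓ hlin, sinCoeff_const_mul, sinCoeff_sub_half,
    sinCoeff_eq_zero_of_symm (f := fun _ => log (2 * π) / 2) fun _ => rfl] at h
  push_cast
  rw [mul_left_comm (2 * π) 2 (n : ℝ), mul_comm (2 : ℝ), mul_assoc _ (2 : ℝ), h]
  field_simp
  ring

lemma continuousOn_mul_log_Gamma : ContinuousOn (fun x => x * log (Gamma x)) (Icc 0 1) := by
  have h : ContinuousOn (fun x => x * log (Gamma (x + 1)) - x * log x) (Icc 0 1) :=
    (continuousOn_id.mul continuousOn_log_Gamma_add_one).sub continuous_mul_log.continuousOn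
  refine h.congr fun x hx => ?_
  obtain rfl | hx0 := hx.1.eq_or_lt
  · simp
  · simp only [log_Gamma_add_one hx0]
    ring

lemma hasDerivAt_mul_log_Gamma {x : ℝ} (hx : 0 < x) : HasDerivAt (fun x => x * log (Gamma x))
    (log (Gamma (x + 1)) + x * deriv (fun x => log (Gamma x)) (x + 1) - (log x + 1)) x := by
  have hΓ : HasDerivAt (fun x => log (Gamma (x + 1)))
      (deriv (fun x => log (Gamma x)) (x + 1)) x :=
    (differentiableAt_log_Gamma (by linarith)).hasDerivAt.comp_add_const x 1
  have h := ((hasDerivAt_id' x).mul hΓ).sub (hasDerivAt_mul_log hx.ne')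
  rw [one_mul] at h
  refine h.congr_of_eventuallyEq ?_
  filter_upwards [lt_mem_nhds hx] with y hy
  simp only [Pi.sub_apply, Pi.mul_apply, log_Gamma_add_one hy]
  ring

-- Riemann–Lebesgue, after one integration by parts.
lemma tendsto_two_pi_mul_sinCoeff_mul_log_Gamma :
    Tendsto (fun n : ℕ => 2 * π * n * sinCoeff (fun x => x * log (Gamma x)) n) atTop (𝓝 0) := by
  have hmem : MemLp (fun x => log (Gamma (x + 1)) + x * deriv (fun x => log (Gamma x)) (x + 1) -
      (log x + 1)) 2 (volume.restrict (Ioc 0 1)) :=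
    ((memLp_Ioc_of_continuousOn continuousOn_log_Gamma_add_one).add
      (memLp_continuousOn_mul continuousOn_id memLp_deriv_log_Gamma_add_one)).sub
      (memLp_two_log.add (memLp_const 1))
  refine (tendsto_cosCoeff_atTop hmem).congr fun n => ?_
  rw [two_pi_mul_sinCoeff continuousOn_mul_log_Gamma (fun x hx => hasDerivAt_mul_log_Gamma hx.1)
    (intervalIntegrable_of_memLp_two hmem)]
  simp

lemma sinCoeff_log_Gamma_eq (n : ℕ) : sinCoeff (fun x => log (Gamma x)) n =
    sinCoeff (fun x => (x - 1 / 2) * log (sin (π * x))) n +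
      2 * sinCoeff (fun x => x * log (Gamma x)) n + log π / (2 * π * n) := by
  have hΓ := memLp_two_log_Gamma
  have hsin := intervalIntegrable_sub_half_mul_log_sin_pi_mul
  set h : ℝ → ℝ := fun x => x * log (Gamma x) with h_def
  have hh : IntervalIntegrable h volume 0 1 :=
    intervalIntegrable_of_memLp_two (memLp_continuousOn_mul continuousOn_id hΓ)
  have hh' : IntervalIntegrable (fun x => h (1 - x)) volume 0 1 :=
    intervalIntegrable_of_memLp_two
      (memLp_comp_one_sub (memLp_continuousOn_mul continuousOn_id hΓ))
  have hlin : IntervalIntegrable (fun x => log π * (x - 1 / 2)) volume 0 1 :=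
    Continuous.intervalIntegrable (by fun_prop) _ _
  have hlogsin := intervalIntegrable_log_sin_pi_mul.const_mul (1 / 2)
  have hconst : IntervalIntegrable (fun _ => log π / 2) volume 0 1 := intervalIntegrable_const
  have hrefl : EqOn (fun x => log (Gamma x)) (fun x =>
      ((x - 1 / 2) * log (sin (π * x)) + (h x - h (1 - x)) - log π * (x - 1 / 2)) +
        (log π / 2 - 1 / 2 * log (sin (π * x)))) (Ioo 0 1) := fun x hx => by
    have := log_Gamma_reflection hx
    simp only [h_def]
    linear_combination (1 - x) * this
  rw [sinCoeff_congr hrefl, sinCoeff_add ((hsin.add (hh.sub hh')).sub hlin) (hconst.sub hlogsin),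
    sinCoeff_sub (hsin.add (hh.sub hh')) hlin, sinCoeff_add hsin (hh.sub hh'), sinCoeff_sub hh hh',
    sinCoeff_comp_one_sub, sinCoeff_const_mul, sinCoeff_sub_half,
    sinCoeff_eq_zero_of_symm (f := fun x => log π / 2 - 1 / 2 * log (sin (π * x)))
      fun x => by rw [sin_pi_mul_one_sub]]
  ring

lemma tendsto_two_pi_mul_sinCoeff_log_Gamma_sub_log :
    Tendsto (fun n : ℕ => 2 * π * n * sinCoeff (fun x => log (Gamma x)) n - log n) atTop
      (𝓝 (log (2 * π) + eulerMascheroniConstant)) := by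
  refine (tendsto_add_atTop_iff_nat 1).1 ?_
  have h := ((tendsto_harmonic_sub_log_add_one.add_const (log (2 * π))).add
    ((tendsto_two_pi_mul_sinCoeff_mul_log_Gamma.comp (tendsto_add_atTop_nat 1)).const_mul 2))
  rw [mul_zero, add_zero, add_comm] at h
  refine h.congr fun n => ?_
  rw [sinCoeff_log_Gamma_eq, sinCoeff_sub_half_mul_log_sin_pi_mul,
    log_mul two_ne_zero pi_ne_zero, Function.comp_apply]
  push_cast
  generalize sinCoeff (fun x => x * log (Gamma x)) (n + 1) = s
  field_simp
  ring

lemma sinCoeff_log_Gamma {m : ℕ} (hm : m ≠ 0) : sinCoeff (fun x => log (Gamma x)) m =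
    (log (2 * π) + eulerMascheroniConstant + log m) / (2 * π * m) := by
  set d : ℕ → ℝ := fun n => 2 * π * n * sinCoeff (fun x => log (Gamma x)) n - log n with hd
  have hdouble {n : ℕ} (hn : n ≠ 0) : d (2 * n) = d n := by
    simp only [hd]
    rw [two_pi_mul_sinCoeff_log_Gamma_two_mul hn, Nat.cast_mul, Nat.cast_two,
      log_mul two_ne_zero (Nat.cast_ne_zero.2 hn)]
    ring
  have hconst (k : ℕ) : d (2 ^ k * m) = d m := by
    induction k with
    | zero => simp
    | succ k ih => rw [pow_succ', mul_assoc, hdouble (by positivity), ih]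
  have hatTop : Tendsto (fun k : ℕ => 2 ^ k * m) atTop atTop :=
    (tendsto_pow_atTop_atTop_of_one_lt one_lt_two).atTop_mul_const' (Nat.pos_of_ne_zero hm)
  have hlim := tendsto_two_pi_mul_sinCoeff_log_Gamma_sub_log.comp hatTop
  have hdm : d m = log (2 * π) + eulerMascheroniConstant :=
    tendsto_nhds_unique (tendsto_const_nhds.congr fun k => (hconst k).symm) hlim
  rw [eq_div_iff (by positivity), ← hdm]
  simp only [hd]
  ring

/-! ### The zeta function and its derivative -/

lemma hasSum_one_div_succ_sq : HasSum (fun n : ℕ => 1 / ((n : ℝ) + 1) ^ 2) (π ^ 2 / 6) := by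
  simpa using (hasSum_nat_add_iff' 1).2 hasSum_zeta_two

lemma hasSum_one_div_succ_pow {k : ℕ} (hk : 1 < k) :
    HasSum (fun n : ℕ => 1 / ((n : ℝ) + 1) ^ k) (riemannZeta k).re := by
  have hsum : Summable fun n : ℕ => 1 / ((n : ℝ) + 1) ^ k := by
    exact_mod_cast (summable_nat_add_iff 1).2 (summable_one_div_nat_pow.2 hk)
  have hzeta : riemannZeta k = ((∑' n : ℕ, 1 / ((n : ℝ) + 1) ^ k : ℝ) : ℂ) := by
    rw [zeta_eq_tsum_one_div_nat_add_one_cpow (by simpa using hk), Complex.ofReal_tsum]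
    refine tsum_congr fun n => ?_
    push_cast
    rw [Complex.cpow_natCast]
  rw [hzeta, Complex.ofReal_re]
  exact hsum.hasSum

lemma hasSum_log_succ_div_succ_pow {k : ℕ} (hk : 1 < k) :
    HasSum (fun n : ℕ => log ((n : ℝ) + 1) / ((n : ℝ) + 1) ^ k) (-(deriv riemannZeta k).re) := by
  have hre : (1 : ℝ) < (k : ℂ).re := by simpa using hk
  have habs : LSeries.abscissaOfAbsConv 1 < ((k : ℂ).re : EReal) := by
    rw [LSeries.abscissaOfAbsConv_one]
    exact_mod_cast hre
  have hderiv : deriv riemannZeta k = deriv (LSeries 1) k := by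
    refine EventuallyEq.deriv_eq ?_
    filter_upwards [(isOpen_lt continuous_const Complex.continuous_re).mem_nhds hre] with s hs
    exact (LSeries_one_eq_riemannZeta hs).symm
  rw [hderiv, LSeries_deriv habs, Complex.neg_re, neg_neg]
  have h := Complex.hasSum_re
    ((hasSum_nat_add_iff' 1).2 (LSeriesSummable_logMul_of_lt_re habs).hasSum)
  convert! h using 1
  · ext n
    rw [LSeries.term_of_ne_zero n.succ_ne_zero, LSeries.logMul, Complex.cpow_natCast,
      Pi.one_apply, mul_one, ← Complex.natCast_log,
      ← Complex.ofReal_re (log ((n : ℝ) + 1) / ((n : ℝ) + 1) ^ k)]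
    push_cast
    rfl
  · simp [LSeries]

lemma deriv_riemannZeta_one_sub {s : ℂ} (hs : ∀ n : ℕ, s ≠ -n) (hs' : s ≠ 1) :
    deriv riemannZeta (1 - s) = 2 * (2 * π) ^ (-s) *
      (((Complex.log (2 * π) * Complex.Gamma s - deriv Complex.Gamma s) *
            Complex.cos (π * s / 2) +
          π / 2 * Complex.Gamma s * Complex.sin (π * s / 2)) * riemannZeta s -
        Complex.Gamma s * Complex.cos (π * s / 2) * deriv riemannZeta s) := by
  have hleft : HasDerivAt (fun s => riemannZeta (1 - s)) (-deriv riemannZeta (1 - s)) s :=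
    HasDerivAt.comp_const_sub 1 s
      (differentiableAt_riemannZeta fun h => hs 0 (by simpa using h)).hasDerivAt
  have hpow : HasDerivAt (fun s : ℂ => (2 * π : ℂ) ^ (-s))
      ((2 * π : ℂ) ^ (-s) * Complex.log (2 * π) * -1) s :=
    (hasDerivAt_id' s).fun_neg.const_cpow (Or.inl (by exact_mod_cast two_pi_pos.ne'))
  have hcos : HasDerivAt (fun s : ℂ => Complex.cos (π * s / 2))
      (-Complex.sin (π * s / 2) * (π * 1 / 2)) s :=
    (((hasDerivAt_id' s).const_mul (π : ℂ)).div_const 2).ccos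
  have hright := (((hpow.const_mul 2).mul (Complex.differentiableAt_Gamma s hs).hasDerivAt).mul
    hcos).mul (differentiableAt_riemannZeta hs').hasDerivAt
  have hΓ : ∀ᶠ z in 𝓝 s, (Complex.Gamma z)⁻¹ ≠ 0 := by
    refine Complex.differentiable_one_div_Gamma.continuous.continuousAt.eventually_ne ?_
    exact inv_ne_zero (Complex.Gamma_ne_zero hs)
  have heq : (fun s : ℂ => riemannZeta (1 - s)) =ᶠ[𝓝 s] fun s : ℂ =>
      2 * (2 * π : ℂ) ^ (-s) * Complex.Gamma s * Complex.cos (π * s / 2) * riemannZeta s := by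
    filter_upwards [hΓ, eventually_ne_nhds hs'] with z hz hz'
    refine riemannZeta_one_sub (fun n hn => hz ?_) hz'
    rw [inv_eq_zero, Complex.Gamma_eq_zero_iff]
    exact ⟨n, hn⟩
  have h := hleft.unique (hright.congr_of_eventuallyEq heq)
  simp only [Pi.mul_apply] at h
  linear_combination -h

lemma re_deriv_riemannZeta_neg_one : (deriv riemannZeta (-1)).re = 1 / (2 * π ^ 2) *
    ((1 - (log (2 * π) + eulerMascheroniConstant)) * (π ^ 2 / 6) + (deriv riemannZeta 2).re) := by
  have hne (n : ℕ) : (2 : ℂ) ≠ -n := fun h => by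
    have : ((2 + n : ℕ) : ℂ) = 0 := by
      push_cast
      linear_combination h
    exact absurd (Nat.cast_eq_zero.1 this) (by simp)
  have hΓ' : deriv Complex.Gamma 2 = 1 - eulerMascheroniConstant := by
    rw [show (2 : ℂ) = (1 : ℕ) + 1 by norm_num, (Complex.hasDerivAt_Gamma_nat 1).deriv]
    simp [neg_add_eq_sub]
  have hΓ : Complex.Gamma 2 = 1 := by simp
  have hpow : (2 * π : ℂ) ^ (-2 : ℂ) = 1 / (4 * π ^ 2) := by
    rw [Complex.cpow_neg, Complex.cpow_ofNat]
    ring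
  have hlog : Complex.log (2 * π) = (log (2 * π) : ℝ) := by
    rw [Complex.ofReal_log two_pi_pos.le]
    push_cast
    rfl
  have hπ : (π : ℂ) ≠ 0 := Complex.ofReal_ne_zero.2 pi_ne_zero
  have h := deriv_riemannZeta_one_sub hne (by norm_num)
  rw [mul_div_cancel_right₀ (π : ℂ) two_ne_zero, Complex.cos_pi, Complex.sin_pi, hΓ, hΓ', hlog,
    hpow, riemannZeta_two] at h
  have hζ' : deriv riemannZeta (-1) =
      ((1 / (2 * π ^ 2) * ((1 - (log (2 * π) + eulerMascheroniConstant)) * (π ^ 2 / 6)) : ℝ) : ℂ) +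
        ((1 / (2 * π ^ 2) : ℝ) : ℂ) * deriv riemannZeta 2 := by
    rw [show (-1 : ℂ) = 1 - 2 by norm_num, h]
    push_cast
    field_simp
    ring
  rw [hζ', Complex.add_re, Complex.re_ofReal_mul, Complex.ofReal_re]
  ring

/-! ### The Parseval identities -/

lemma memLp_two_sub_half_mul_log_sin_pi_mul :
    MemLp (fun x => (x - 1 / 2) * log (sin (π * x))) 2 (volume.restrict (Ioc 0 1)) :=
  memLp_continuousOn_mul (by fun_prop) memLp_two_log_sin_pi_mul

lemma cosCoeff_sub_half_mul_log_sin_pi_mul (n : ℕ) :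
    cosCoeff (fun x => (x - 1 / 2) * log (sin (π * x))) n = 0 :=
  cosCoeff_eq_zero_of_antisymm (fun x => by rw [sin_pi_mul_one_sub]; ring) n

-- Parseval for `(x - 1/2) log (sin (π x))` against `x - 1/2` and for `log (sin (π x))` against
-- `(x - 1/2)²` involve the same integral, whose second evaluation is a multiple of `ζ(3)`.
lemma hasSum_harmonic_div_succ_sq :
    HasSum (fun n : ℕ => (harmonic n : ℝ) / ((n : ℝ) + 1) ^ 2) (riemannZeta 3).re := by
  have hlin := hasSum_cosCoeff_mul_add_sinCoeff_mul memLp_two_sub_half_mul_log_sin_pi_mul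
    (memLp_Ioc_of_continuousOn (f := fun x => x - 1 / 2) (by fun_prop))
  have hquad := hasSum_cosCoeff_mul_add_sinCoeff_mul memLp_two_log_sin_pi_mul
    (memLp_Ioc_of_continuousOn (f := fun x => (x - 1 / 2) ^ 2) (by fun_prop))
  have hmean : ∫ x in (0 : ℝ)..1, (x - 1 / 2) ^ 2 = 1 / 12 := by
    rw [intervalIntegral.integral_comp_sub_right (fun x => x ^ 2), integral_pow]
    norm_num
  have hint : ∫ x in (0 : ℝ)..1, (x - 1 / 2) * log (sin (π * x)) * (x - 1 / 2) =
      ∫ x in (0 : ℝ)..1, log (sin (π * x)) * (x - 1 / 2) ^ 2 :=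
    intervalIntegral.integral_congr fun x _ => by ring
  simp only [cosCoeff_sub_half_mul_log_sin_pi_mul, sinCoeff_sub_half_mul_log_sin_pi_mul,
    sinCoeff_sub_half, hint, zero_mul, zero_add, sub_zero] at hlin
  simp only [cosCoeff_log_sin_pi_mul (Nat.succ_ne_zero _),
    cosCoeff_sub_half_sq (Nat.succ_ne_zero _), cosCoeff_zero_right, integral_log_sin_pi_mul, hmean,
    sinCoeff_eq_zero_of_symm (f := fun x => log (sin (π * x))) fun x => by
      rw [sin_pi_mul_one_sub]] at hquad
  have hζ := (hasSum_one_div_succ_pow (k := 3) (by norm_num)).mul_left (-1 / (2 * π ^ 2))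
  have hval := hquad.unique (by
    convert! hζ using 2 with n
    push_cast
    field_simp
    ring)
  convert! (hlin.mul_left (-(2 * π ^ 2))).sub (hasSum_one_div_succ_sq.mul_left (log 2)) using 1
  · ext n
    push_cast
    field_simp
    ring
  · rw [sub_eq_iff_eq_add.1 hval]
    push_cast
    field_simp
    ring

lemma memLp_two_mul_log_sin_pi_mul :
    MemLp (fun x => x * log (sin (π * x))) 2 (volume.restrict (Ioc 0 1)) :=
  memLp_continuousOn_mul continuousOn_id memLp_two_log_sin_pi_mul

lemma mul_log_sin_pi_mul_eq (x : ℝ) : x * log (sin (π * x)) =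
    (x - 1 / 2) * log (sin (π * x)) + 1 / 2 * log (sin (π * x)) := by
  ring

lemma cosCoeff_mul_log_sin_pi_mul (n : ℕ) : cosCoeff (fun x => x * log (sin (π * x))) n =
    1 / 2 * cosCoeff (fun x => log (sin (π * x))) n := by
  rw [cosCoeff_congr fun x _ => mul_log_sin_pi_mul_eq x,
    cosCoeff_add intervalIntegrable_sub_half_mul_log_sin_pi_mul
    (intervalIntegrable_log_sin_pi_mul.const_mul _), cosCoeff_const_mul,
    cosCoeff_sub_half_mul_log_sin_pi_mul, zero_add]

lemma sinCoeff_mul_log_sin_pi_mul (n : ℕ) : sinCoeff (fun x => x * log (sin (π * x))) n =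
    sinCoeff (fun x => (x - 1 / 2) * log (sin (π * x))) n := by
  rw [sinCoeff_congr fun x _ => mul_log_sin_pi_mul_eq x,
    sinCoeff_add intervalIntegrable_sub_half_mul_log_sin_pi_mul
    (intervalIntegrable_log_sin_pi_mul.const_mul _),
    sinCoeff_eq_zero_of_symm (f := fun x => 1 / 2 * log (sin (π * x)))
      fun x => by rw [sin_pi_mul_one_sub], add_zero]

lemma hasSum_integral_log_Gamma_mul_log_sin :
    HasSum (fun n : ℕ => -(1 / 8) * (1 / ((n : ℝ) + 1) ^ 2) + 1 / (2 * π ^ 2) *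
        ((log (2 * π) + eulerMascheroniConstant + log ((n : ℝ) + 1)) * (log 2 + harmonic n) /
          ((n : ℝ) + 1) ^ 2))
      ((∫ x in (0 : ℝ)..1, x * log (Gamma x) * log (sin (π * x))) +
        log (2 * π) * log 2 / 4) := by
  have h := hasSum_cosCoeff_mul_add_sinCoeff_mul memLp_two_log_Gamma memLp_two_mul_log_sin_pi_mul
  have hint : ∫ x in (0 : ℝ)..1, log (Gamma x) * (x * log (sin (π * x))) =
      ∫ x in (0 : ℝ)..1, x * log (Gamma x) * log (sin (π * x)) :=
    intervalIntegral.integral_congr fun x _ => by ring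
  simp only [cosCoeff_mul_log_sin_pi_mul, sinCoeff_mul_log_sin_pi_mul, cosCoeff_log_Gamma,
    cosCoeff_one (Nat.succ_ne_zero _), cosCoeff_log_sin_pi_mul (Nat.succ_ne_zero _),
    sinCoeff_log_Gamma (Nat.succ_ne_zero _), sinCoeff_sub_half_mul_log_sin_pi_mul] at h
  simp only [cosCoeff_zero_right, integral_log_sin_pi_mul, intervalIntegral.integral_const,
    hint] at h
  convert! h using 1
  · ext n
    push_cast
    field_simp
    ring
  · rw [log_mul two_ne_zero pi_ne_zero, sub_zero, one_smul]
    ring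

lemma hasSum_harmonic_mul_log_div_sq_add_two_iff {s : ℝ} :
    HasSum (fun n : ℕ => (harmonic (n + 2) : ℝ) * log (n + 2) / ((n : ℝ) + 2) ^ 2) s ↔
      HasSum (fun n : ℕ => (harmonic (n + 1) : ℝ) * log (n + 1) / ((n : ℝ) + 1) ^ 2) s := by
  rw [← hasSum_nat_add_iff'
    (f := fun n : ℕ => (harmonic (n + 1) : ℝ) * log (n + 1) / ((n : ℝ) + 1) ^ 2) 1]
  simp [-harmonic_succ, add_assoc, one_add_one_eq_two]

lemma hasSum_harmonic_mul_log_div_sq :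
    HasSum (fun n : ℕ => (harmonic (n + 2) : ℝ) * log (n + 2) / ((n : ℝ) + 2) ^ 2)
      (2 * π ^ 2 * ((∫ x in (0 : ℝ)..1, x * log (Gamma x) * log (sin (π * x))) +
          log (2 * π) * log 2 / 4 + π ^ 2 / 48) -
        (log (2 * π) + eulerMascheroniConstant) * (log 2 * (π ^ 2 / 6) + (riemannZeta 3).re) +
        log 2 * (deriv riemannZeta 2).re - (deriv riemannZeta 3).re) := by
  have hlog_sq := hasSum_log_succ_div_succ_pow (k := 2) (by norm_num)
  have hlog_cube := hasSum_log_succ_div_succ_pow (k := 3) (by norm_num)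
  have h := ((((hasSum_integral_log_Gamma_mul_log_sin.add
    (hasSum_one_div_succ_sq.mul_left (1 / 8))).mul_left (2 * π ^ 2)).sub
    (((hasSum_one_div_succ_sq.mul_left (log 2)).add hasSum_harmonic_div_succ_sq).mul_left
      (log (2 * π) + eulerMascheroniConstant))).sub (hlog_sq.mul_left (log 2))).add hlog_cube
  rw [hasSum_harmonic_mul_log_div_sq_add_two_iff]
  convert! h using 1
  · ext n
    rw [harmonic_succ]
    push_cast
    field_simp
    ring
  · push_cast
    ring

end

/-- `∫₀¹ x·log Γ(x)·log(sin(πx)) dx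
      = −(1/4)·log 2·log(2π/A⁴) − π²/48 + C·ζ(3)/(2π²) + ζ′(3)/(2π²)
        + (1/(2π²))·∑_{n=2}^∞ (H_n·log n)/n²`,
where `A = exp(1/12 − ζ′(−1))` is the Glaisher–Kinkelin constant,
`C = log(2π) + γ`, and `H_n` is the n-th harmonic number. -/
theorem integral_x_log_Gamma_mul_log_sin :
    ∫ x in (0:ℝ)..1, x * Real.log (Real.Gamma x) * Real.log (Real.sin (π * x)) =
      -(1 / 4) * Real.log 2 *
          Real.log (2 * π / (Real.exp (1 / 12 - (deriv riemannZeta (-1)).re)) ^ 4)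
        - π ^ 2 / 48
        + (Real.log (2 * π) + Real.eulerMascheroniConstant) * (riemannZeta 3).re / (2 * π ^ 2)
        + (deriv riemannZeta 3).re / (2 * π ^ 2)
        + (1 / (2 * π ^ 2)) *
            ∑' n : ℕ, (harmonic (n + 2) : ℝ) * Real.log (n + 2) / ((n : ℝ) + 2) ^ 2 := by
  have hA : log (2 * π / exp (1 / 12 - (deriv riemannZeta (-1)).re) ^ 4) =
      log (2 * π) - 4 * (1 / 12 - (deriv riemannZeta (-1)).re) := by
    rw [log_div two_pi_pos.ne' (by positivity), log_pow, log_exp, Nat.cast_ofNat]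
  rw [hasSum_harmonic_mul_log_div_sq.tsum_eq, hA, re_deriv_riemannZeta_neg_one]
  generalize (∫ x in (0 : ℝ)..1, x * log (Gamma x) * log (sin (π * x))) = I
  field_simp
  ring
end

section
/- ∫₀¹ (x/π)·log(sin(πx)/π)·Cl₂(2πx) dx = ζ(3)·log(2π)/(2π²) + π²/720, where Cl₂ is the Clausen function. -/
open Real

/-- The Clausen function `Cl₂(θ) = ∑_{k=1}^∞ sin(kθ)/k²`. -/
noncomputable def Cl2 (θ : ℝ) : ℝ := ∑' k : ℕ, Real.sin ((k + 1) * θ) / ((k : ℝ) + 1) ^ 2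

/-!
Writing `S = Cl₂`, one has `S'(θ) = -log (2 sin (θ/2))` on `(0, 2π)` and `S(2π) = 0`, so
integrating `(θ S²)' = S² + 2 θ S S'` over `[0, 2π]` turns `∫ θ S log (2 sin (θ/2))` into `½ ∫ S²`,
which Parseval evaluates as `π ζ(4) / 2`. After `θ = 2πx`, the remaining factor `1 / (2π)` inside
the logarithm contributes a multiple of `∫ θ S = -2π ζ(3)`.

The Fourier series of `S'` does not converge absolutely, so `S` is not differentiated term by term
but as `S(θ) = Im Li₂(e^{iθ})`: the derivative `-log (1 - z) / z` of `Li₂` on the open disc is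
continuous up to the circle away from `1`, hence it is still the derivative of `Li₂` there,
relative to the closed disc.
-/

open Filter Topology MeasureTheory Set Metric

theorem summable_one_div_add_one_sq : Summable fun k : ℕ => 1 / ((k : ℝ) + 1) ^ 2 := by
  simpa using (summable_nat_add_iff 1).2 (Real.summable_one_div_nat_pow.2 one_lt_two)

theorem hasDerivWithinAt_closure_of_tendsto_deriv {E : Type*} [NormedAddCommGroup E]
    [NormedSpace ℂ E] {f : ℂ → E} {s : Set ℂ} {z : ℂ} {f' : E} (hf : DifferentiableOn ℂ f s)
    (hconv : Convex ℝ s) (hopen : IsOpen s) (hcont : ∀ w ∈ closure s, ContinuousWithinAt f s w)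
    (hderiv : Tendsto (deriv f) (𝓝[s] z) (𝓝 f')) :
    HasDerivWithinAt f f' (closure s) z := by
  have hfderiv : Tendsto (fderiv ℝ f) (𝓝[s] z)
      (𝓝 ((ContinuousLinearMap.toSpanSingleton ℂ f').restrictScalars ℝ)) := by
    have hcontL : Continuous fun v : E =>
        (ContinuousLinearMap.toSpanSingleton ℂ v).restrictScalars ℝ :=
      (ContinuousLinearMap.continuous_restrictScalars ℝ).comp
        (ContinuousLinearMap.toSpanSingletonCLE (𝕜 := ℂ) (E := E)).continuous
    refine ((hcontL.tendsto f').comp hderiv).congr' ?_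
    filter_upwards [self_mem_nhdsWithin] with w hw
    have hfw := hf.differentiableAt (hopen.mem_nhds hw)
    rw [hfw.fderiv_restrictScalars ℝ, ← toSpanSingleton_deriv]
    rfl
  exact (hasFDerivWithinAt_closure_of_tendsto_fderiv (hf.restrictScalars ℝ) hconv hopen hcont
    hfderiv).of_restrictScalars ℝ rfl

/-- The dilogarithm `Li₂(z) = ∑_{k=1}^∞ z^k / k²`, meaningful for `‖z‖ ≤ 1`: outside the closed unit
disc the series diverges and the value is the junk value `0`. It serves to differentiate its
imaginary part `Cl2` on the unit circle. -/
noncomputable def dilog (z : ℂ) : ℂ := ∑' k : ℕ, z ^ (k + 1) / ((k : ℂ) + 1) ^ 2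

theorem norm_pow_div_add_one_sq_le {z : ℂ} (hz : ‖z‖ ≤ 1) (k : ℕ) :
    ‖z ^ (k + 1) / ((k : ℂ) + 1) ^ 2‖ ≤ 1 / ((k : ℝ) + 1) ^ 2 := by
  have hk : ‖(k : ℂ) + 1‖ = (k : ℝ) + 1 := by exact_mod_cast Complex.norm_natCast (k + 1)
  rw [norm_div, norm_pow, norm_pow, hk]
  gcongr
  exact pow_le_one₀ (norm_nonneg z) hz

theorem continuousOn_dilog : ContinuousOn dilog (closedBall 0 1) :=
  continuousOn_tsum (fun k => by fun_prop) summable_one_div_add_one_sq fun k _ hz =>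
    norm_pow_div_add_one_sq_le (mem_closedBall_zero_iff.1 hz) k

theorem differentiableOn_dilog : DifferentiableOn ℂ dilog (ball 0 1) :=
  Complex.differentiableOn_tsum_of_summable_norm summable_one_div_add_one_sq
    (fun k => by fun_prop) isOpen_ball fun k _ hz =>
      norm_pow_div_add_one_sq_le (mem_ball_zero_iff.1 hz).le k

theorem mul_deriv_dilog {z : ℂ} (hz : ‖z‖ < 1) : z * deriv dilog z = -Complex.log (1 - z) := by
  have hderiv : HasSum (fun k : ℕ => deriv (fun w : ℂ => w ^ (k + 1) / ((k : ℂ) + 1) ^ 2) z)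
      (deriv dilog z) :=
    Complex.hasSum_deriv_of_summable_norm summable_one_div_add_one_sq (fun k => by fun_prop)
      isOpen_ball (fun k _ hw => norm_pow_div_add_one_sq_le (mem_ball_zero_iff.1 hw).le k)
      (mem_ball_zero_iff.2 hz)
  have hlog := (hasSum_nat_add_iff' 1).2 (Complex.hasSum_taylorSeries_neg_log hz)
  refine (hderiv.mul_left z).unique ?_
  convert! hlog using 1
  · ext k
    have hk : (k : ℂ) + 1 ≠ 0 := Nat.cast_add_one_ne_zero k
    simp only [deriv_div_const, deriv_pow_field, Nat.cast_add, Nat.cast_one, add_tsub_cancel_right]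
    field_simp
    rw [pow_succ']
  · simp

theorem one_sub_mem_slitPlane {z : ℂ} (hz : ‖z‖ ≤ 1) (hz1 : z ≠ 1) :
    1 - z ∈ Complex.slitPlane := by
  have hre : z.re ≠ 1 := fun hre => hz1 <| by
    have hnorm : z.re = ‖z‖ := le_antisymm (Complex.re_le_norm z) (hre ▸ hz)
    exact Complex.ext hre (Complex.re_eq_norm.1 hnorm).2.symm
  have hlt : z.re < 1 := lt_of_le_of_ne ((Complex.re_le_norm z).trans hz) hre
  exact Or.inl (by simpa using hlt)

theorem hasDerivWithinAt_dilog {z : ℂ} (hz : ‖z‖ ≤ 1) (hz0 : z ≠ 0) (hz1 : z ≠ 1) :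
    HasDerivWithinAt dilog (-Complex.log (1 - z) / z) (closedBall 0 1) z := by
  rw [← closure_ball (0 : ℂ) one_ne_zero]
  refine hasDerivWithinAt_closure_of_tendsto_deriv differentiableOn_dilog (convex_ball 0 1)
    isOpen_ball (fun w hw => ?_) ?_
  · rw [closure_ball (0 : ℂ) one_ne_zero] at hw
    exact (continuousOn_dilog w hw).mono ball_subset_closedBall
  have hcont : ContinuousAt (fun w => -Complex.log (1 - w) / w) z :=
    (((continuousAt_const.sub continuousAt_id).clog (one_sub_mem_slitPlane hz hz1)).neg).div
      continuousAt_id hz0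
  refine (hcont.tendsto.mono_left nhdsWithin_le_nhds).congr' ?_
  filter_upwards [self_mem_nhdsWithin, nhdsWithin_le_nhds (eventually_ne_nhds hz0)] with w hw hw0
  rw [← mul_deriv_dilog (mem_ball_zero_iff.1 hw), mul_div_cancel_left₀ _ hw0]

theorem Cl2_eq_im_dilog (θ : ℝ) : Cl2 θ = (dilog (Complex.exp (Complex.I * θ))).im := by
  have hz : ‖Complex.exp (Complex.I * θ)‖ ≤ 1 := (Complex.norm_exp_I_mul_ofReal θ).le
  rw [Cl2, dilog, Complex.im_tsum (.of_norm_bounded summable_one_div_add_one_sq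
    (norm_pow_div_add_one_sq_le hz))]
  congr with k
  have hterm : Complex.exp (Complex.I * θ) ^ (k + 1) / ((k : ℂ) + 1) ^ 2 =
      Complex.exp ((((k : ℝ) + 1) * θ : ℝ) * Complex.I) / (((k : ℝ) + 1) ^ 2 : ℝ) := by
    rw [← Complex.exp_nat_mul]
    push_cast
    ring_nf
  rw [hterm, Complex.div_ofReal_im, Complex.exp_ofReal_mul_I_im]

theorem hasDerivAt_Cl2 {θ : ℝ} (hθ : Real.sin (θ / 2) ≠ 0) :
    HasDerivAt Cl2 (-Real.log (2 * Real.sin (θ / 2))) θ := by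
  let z : ℝ → ℂ := fun t => Complex.exp (Complex.I * t)
  have hnorm (t : ℝ) : ‖z t‖ = 1 := Complex.norm_exp_I_mul_ofReal t
  have hdist : ‖z θ - 1‖ = ‖2 * Real.sin (θ / 2)‖ := Complex.norm_exp_I_mul_ofReal_sub_one θ
  have hz0 : z θ ≠ 0 := Complex.exp_ne_zero _
  have hz1 : z θ ≠ 1 := by
    rw [← sub_ne_zero, ← norm_ne_zero_iff, hdist]
    simpa using hθ
  have hz : HasDerivAt z (z θ * Complex.I) θ := by
    simpa using ((hasDerivAt_id (θ : ℂ)).const_mul Complex.I).cexp.comp_ofReal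
  have hdilog : HasDerivAt (dilog ∘ z) (z θ * Complex.I * (-Complex.log (1 - z θ) / z θ)) θ :=
    (hasDerivWithinAt_dilog (hnorm θ).le hz0 hz1).scomp_hasDerivAt θ hz
      fun t => mem_closedBall_zero_iff.2 (hnorm t).le
  have him := Complex.imCLM.hasFDerivAt.comp_hasDerivAt θ hdilog
  rw [show Cl2 = Complex.imCLM ∘ dilog ∘ z from funext Cl2_eq_im_dilog]
  refine him.congr_deriv ?_
  calc (z θ * Complex.I * (-Complex.log (1 - z θ) / z θ)).im
      = (-(Complex.I * Complex.log (1 - z θ))).im := by field_simp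
    _ = -Real.log ‖z θ - 1‖ := by simp [Complex.log_re, norm_sub_rev]
    _ = -Real.log (2 * Real.sin (θ / 2)) := by rw [hdist, Real.norm_eq_abs, Real.log_abs]

/-- The sine series with coefficients `a`, indexed from `0`: `a k` is the coefficient of
`sin ((k + 1) θ)`. The function `Cl2` is the case `a k = 1 / (k + 1)²`. -/
noncomputable def sineSeries (a : ℕ → ℝ) (θ : ℝ) : ℝ := ∑' k : ℕ, a k * Real.sin ((k + 1) * θ)

section SineSeries

variable {a b : ℕ → ℝ}

theorem norm_mul_sin_le (c θ : ℝ) : ‖c * Real.sin θ‖ ≤ ‖c‖ := by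
  rw [norm_mul]
  exact mul_le_of_le_one_right (norm_nonneg c) (Real.abs_sin_le_one θ)

theorem hasSum_sineSeries (ha : Summable a) (θ : ℝ) :
    HasSum (fun k : ℕ => a k * Real.sin ((k + 1) * θ)) (sineSeries a θ) :=
  (Summable.of_norm_bounded ha.norm fun _ => norm_mul_sin_le _ _).hasSum

theorem continuous_sineSeries (ha : Summable a) : Continuous (sineSeries a) :=
  continuous_tsum (fun k => by fun_prop) ha.norm fun _ _ => norm_mul_sin_le _ _

theorem hasSum_integral_mul_sineSeries (ha : Summable a) {h : ℝ → ℝ} {α β : ℝ}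
    (hh : IntervalIntegrable h volume α β) :
    HasSum (fun k : ℕ => a k * ∫ θ in α..β, h θ * Real.sin ((k + 1) * θ))
      (∫ θ in α..β, h θ * sineSeries a θ) := by
  simp_rw [← intervalIntegral.integral_const_mul]
  refine intervalIntegral.hasSum_integral_of_dominated_convergence
    (fun k θ => ‖a k‖ * ‖h θ‖) (fun k => ?_) (fun k => ?_) ?_ ?_ ?_
  · have hsin : ContinuousOn (fun θ => Real.sin ((k + 1) * θ)) (uIcc α β) := by fun_prop
    exact ((hh.mul_continuousOn hsin).const_mul _).aestronglyMeasurable_restrict_uIoc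
  · refine Eventually.of_forall fun θ _ => ?_
    rw [mul_left_comm, norm_mul, mul_comm]
    exact mul_le_mul_of_nonneg_right (norm_mul_sin_le _ _) (norm_nonneg _)
  · exact Eventually.of_forall fun θ _ => ha.norm.mul_right _
  · simp_rw [tsum_mul_right]
    exact hh.norm.const_mul _
  · refine Eventually.of_forall fun θ _ => ?_
    simp_rw [mul_left_comm (a _)]
    exact (hasSum_sineSeries ha θ).mul_left _

theorem integral_cos_int_mul {n : ℤ} (hn : n ≠ 0) :
    ∫ θ in (0 : ℝ)..2 * π, Real.cos (n * θ) = 0 := by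
  have hsin : Real.sin (n * (2 * π)) = 0 := by simpa using Real.sin_add_int_mul_two_pi 0 n
  simp [intervalIntegral.integral_comp_mul_left Real.cos (Int.cast_ne_zero.2 hn), hsin]

theorem integral_sin_nat_mul_mul_sin_nat_mul (m : ℕ) {n : ℕ} (hn : n ≠ 0) :
    ∫ θ in (0 : ℝ)..2 * π, Real.sin (m * θ) * Real.sin (n * θ) = if m = n then π else 0 := by
  have hprod (θ : ℝ) : Real.sin (m * θ) * Real.sin (n * θ) =
      (Real.cos ((m - n : ℤ) * θ) - Real.cos ((m + n : ℤ) * θ)) / 2 := by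
    push_cast
    rw [sub_mul, add_mul, Real.cos_sub, Real.cos_add]
    ring
  simp_rw [hprod]
  rw [intervalIntegral.integral_div, intervalIntegral.integral_sub
    (Continuous.intervalIntegrable (by fun_prop) _ _)
    (Continuous.intervalIntegrable (by fun_prop) _ _), integral_cos_int_mul (n := m + n) (by lia)]
  split_ifs with h
  · simp [h]
  · rw [integral_cos_int_mul (n := m - n) (by lia), sub_zero, zero_div]

theorem integral_mul_sin_nat_mul {n : ℕ} (hn : n ≠ 0) :
    ∫ θ in (0 : ℝ)..2 * π, θ * Real.sin (n * θ) = -(2 * π / n) := by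
  have hn' : (n : ℝ) ≠ 0 := Nat.cast_ne_zero.2 hn
  have hderiv (θ : ℝ) : HasDerivAt (fun t => -Real.cos (n * t) / n) (Real.sin (n * θ)) θ := by
    have h := (((hasDerivAt_id θ).const_mul (n : ℝ)).cos).neg.div_const (n : ℝ)
    convert! h using 1
    simp only [id]
    field_simp
  have hcos : ∫ θ in (0 : ℝ)..2 * π, Real.cos (n * θ) = 0 :=
    mod_cast integral_cos_int_mul (Nat.cast_ne_zero.2 hn)
  rw [intervalIntegral.integral_mul_deriv_eq_deriv_mul (fun θ _ => hasDerivAt_id' θ)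
    (fun θ _ => hderiv θ) intervalIntegrable_const
    (Continuous.intervalIntegrable (by fun_prop) _ _)]
  simp [hcos, Real.cos_nat_mul_two_pi]
  ring

theorem integral_sineSeries_mul_sin (ha : Summable a) (k : ℕ) :
    ∫ θ in (0 : ℝ)..2 * π, sineSeries a θ * Real.sin ((k + 1) * θ) = π * a k := by
  have hterm (j : ℕ) : a j * ∫ θ in (0 : ℝ)..2 * π,
      Real.sin ((k + 1) * θ) * Real.sin ((j + 1) * θ) = if j = k then π * a k else 0 := by
    have h := integral_sin_nat_mul_mul_sin_nat_mul (k + 1) j.succ_ne_zero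
    push_cast [add_left_inj] at h
    rw [h]
    rcases eq_or_ne j k with rfl | hjk
    · simp [mul_comm]
    · simp [hjk, hjk.symm]
  have h := hasSum_integral_mul_sineSeries ha (h := fun θ => Real.sin ((k + 1) * θ))
    (Continuous.intervalIntegrable (by fun_prop) 0 (2 * π))
  simp_rw [hterm, mul_comm (Real.sin _)] at h
  exact h.unique (hasSum_ite_eq k _)

theorem hasSum_integral_sineSeries_mul_sineSeries (ha : Summable a) (hb : Summable b) :
    HasSum (fun k => π * (a k * b k))
      (∫ θ in (0 : ℝ)..2 * π, sineSeries a θ * sineSeries b θ) := by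
  have h := hasSum_integral_mul_sineSeries hb
    ((continuous_sineSeries ha).intervalIntegrable 0 (2 * π))
  simp_rw [integral_sineSeries_mul_sin ha] at h
  convert h using 2 with k
  ring

theorem hasSum_integral_id_mul_sineSeries (ha : Summable a) :
    HasSum (fun k : ℕ => -(2 * π) * (a k / (k + 1)))
      (∫ θ in (0 : ℝ)..2 * π, θ * sineSeries a θ) := by
  have h := hasSum_integral_mul_sineSeries ha
    (continuous_id'.intervalIntegrable 0 (2 * π))
  convert h using 2 with k
  have hk := integral_mul_sin_nat_mul k.succ_ne_zero
  push_cast at hk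
  rw [hk]
  ring

end SineSeries

theorem Cl2_eq_sineSeries : Cl2 = sineSeries fun k => 1 / ((k : ℝ) + 1) ^ 2 := by
  ext θ
  simp only [Cl2, sineSeries, one_div_mul_eq_div]

theorem continuous_Cl2 : Continuous Cl2 :=
  Cl2_eq_sineSeries ▸ continuous_sineSeries summable_one_div_add_one_sq

theorem Cl2_two_pi : Cl2 (2 * π) = 0 := by
  have hsin (k : ℕ) : Real.sin ((k + 1) * (2 * π)) = 0 := by
    simpa using Real.sin_add_nat_mul_two_pi 0 (k + 1)
  simp [Cl2, hsin]

theorem riemannZeta_natCast_re {n : ℕ} (hn : 1 < n) :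
    (riemannZeta n).re = ∑' k : ℕ, 1 / ((k : ℝ) + 1) ^ n := by
  rw [zeta_eq_tsum_one_div_nat_add_one_cpow (by exact_mod_cast hn),
    ← Complex.ofReal_re (∑' k : ℕ, _)]
  push_cast
  simp_rw [Complex.cpow_natCast]

theorem integral_id_mul_Cl2 :
    ∫ θ in (0 : ℝ)..2 * π, θ * Cl2 θ = -(2 * π) * (riemannZeta 3).re := by
  have hzeta : (riemannZeta 3).re = ∑' k : ℕ, 1 / ((k : ℝ) + 1) ^ 3 :=
    mod_cast riemannZeta_natCast_re (n := 3) (by norm_num)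
  rw [Cl2_eq_sineSeries, hzeta, ← tsum_mul_left,
    ← (hasSum_integral_id_mul_sineSeries summable_one_div_add_one_sq).tsum_eq]
  congr with k
  field_simp

theorem integral_Cl2_sq : ∫ θ in (0 : ℝ)..2 * π, Cl2 θ ^ 2 = π ^ 5 / 90 := by
  have hzeta : HasSum (fun k : ℕ => 1 / ((k : ℝ) + 1) ^ 4) (π ^ 4 / 90) := by
    simpa using (hasSum_nat_add_iff' 1).2 hasSum_zeta_four
  simp_rw [Cl2_eq_sineSeries, sq (sineSeries _ _), show π ^ 5 / 90 = π * (π ^ 4 / 90) by ring]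
  refine (hasSum_integral_sineSeries_mul_sineSeries summable_one_div_add_one_sq
    summable_one_div_add_one_sq).unique ?_
  convert! hzeta.mul_left π using 2 with k
  field_simp

theorem integral_id_mul_self_mul_deriv {f f' : ℝ → ℝ} {a b : ℝ} (hf : ContinuousOn f (uIcc a b))
    (hff' : ∀ x ∈ Ioo (min a b) (max a b), HasDerivAt f (f' x) x)
    (hf' : IntervalIntegrable f' volume a b) :
    ∫ x in a..b, x * (f x * f' x) =
      (b * f b ^ 2 - a * f a ^ 2 - ∫ x in a..b, f x ^ 2) / 2 := by
  have h := intervalIntegral.integral_mul_deriv_eq_deriv_mul_of_hasDerivAt continuousOn_id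
    (hf.pow 2) (fun x _ => hasDerivAt_id x) (v' := fun x => 2 * (f x * f' x))
    (fun x hx => by simpa [mul_assoc] using (hff' x hx).pow 2) intervalIntegrable_const
    ((hf'.continuousOn_mul hf).const_mul 2)
  simp only [id, Pi.pow_apply, one_mul, mul_left_comm _ (2 : ℝ),
    intervalIntegral.integral_const_mul] at h
  linarith

theorem intervalIntegrable_log_two_mul_sin_half (a b : ℝ) :
    IntervalIntegrable (fun θ => Real.log (2 * Real.sin (θ / 2))) volume a b :=
  MeromorphicOn.intervalIntegrable_log fun θ _ => by fun_prop

theorem sin_half_pos {θ : ℝ} (hθ : θ ∈ Ioo 0 (2 * π)) : 0 < Real.sin (θ / 2) :=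
  Real.sin_pos_of_pos_of_lt_pi (half_pos hθ.1) (by linarith [hθ.2])

theorem integral_id_mul_Cl2_mul_log_two_mul_sin_half :
    ∫ θ in (0 : ℝ)..2 * π, θ * (Cl2 θ * Real.log (2 * Real.sin (θ / 2))) = π ^ 5 / 180 := by
  have hparts := integral_id_mul_self_mul_deriv (a := 0) (b := 2 * π) continuous_Cl2.continuousOn
    (fun θ hθ => hasDerivAt_Cl2 (sin_half_pos (by simpa [two_pi_pos.le] using hθ)).ne')
    (intervalIntegrable_log_two_mul_sin_half _ _).neg
  simp only [mul_neg, intervalIntegral.integral_neg, Cl2_two_pi, integral_Cl2_sq] at hparts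
  linarith

theorem integral_id_mul_Cl2_mul_log_const_mul_sin_half {c : ℝ} (hc : c ≠ 0) :
    ∫ θ in (0 : ℝ)..2 * π, θ * (Cl2 θ * Real.log (c * Real.sin (θ / 2))) =
      π ^ 5 / 180 - 2 * π * (riemannZeta 3).re * Real.log (c / 2) := by
  have hCl2 := continuous_Cl2
  have hsplit : ∫ θ in (0 : ℝ)..2 * π, θ * (Cl2 θ * Real.log (c * Real.sin (θ / 2))) =
      ∫ θ in (0 : ℝ)..2 * π, (θ * (Cl2 θ * Real.log (2 * Real.sin (θ / 2))) +
        Real.log (c / 2) * (θ * Cl2 θ)) := by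
    refine intervalIntegral.integral_congr_Ioo_of_le two_pi_pos.le fun θ hθ => ?_
    have hsin := (sin_half_pos hθ).ne'
    simp only [Real.log_mul hc hsin, Real.log_mul two_ne_zero hsin, Real.log_div hc two_ne_zero]
    ring
  rw [hsplit, intervalIntegral.integral_add, intervalIntegral.integral_const_mul,
    integral_id_mul_Cl2_mul_log_two_mul_sin_half, integral_id_mul_Cl2]
  · ring
  · exact ((intervalIntegrable_log_two_mul_sin_half _ _).continuousOn_mul
      hCl2.continuousOn).continuousOn_mul continuousOn_id
  · exact Continuous.intervalIntegrable (by fun_prop) _ _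

/-- `∫₀¹ (x/π)·log(sin(πx)/π)·Cl₂(2πx) dx = ζ(3)·log(2π)/(2π²) + π²/720`. -/
theorem integral_x_div_pi_log_sin_div_pi_mul_Cl2 :
    ∫ x in (0:ℝ)..1, (x / π) * Real.log (Real.sin (π * x) / π) * Cl2 (2 * π * x) =
      (riemannZeta 3).re * Real.log (2 * π) / (2 * π ^ 2) + π ^ 2 / 720 := by
  let F : ℝ → ℝ := fun θ => θ * (Cl2 θ * Real.log (π⁻¹ * Real.sin (θ / 2)))
  have hF (x : ℝ) : x / π * Real.log (Real.sin (π * x) / π) * Cl2 (2 * π * x) =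
      1 / (2 * π ^ 2) * F (2 * π * x) := by
    simp only [F, show 2 * π * x / 2 = π * x by ring, ← div_eq_inv_mul]
    field_simp
  have hlog : Real.log (π⁻¹ / 2) = -Real.log (2 * π) := by
    rw [← Real.log_inv, mul_inv_rev, div_eq_mul_inv]
  simp_rw [hF]
  rw [intervalIntegral.integral_const_mul,
    intervalIntegral.integral_comp_mul_left F two_pi_pos.ne', mul_zero, mul_one,
    integral_id_mul_Cl2_mul_log_const_mul_sin_half (inv_ne_zero pi_ne_zero), hlog, smul_eq_mul]
  field_simp
  ring
end
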